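/- arXiv:2511.01035 — 2 statements merged into one kernel-verified Lean document; each statement's English description precedes it below -/
import Mathlib

section
/- Let s > 0, m > 0, β > 0, Δt > 0 and suppose 0 < α < 2s/(s + m) (equivalently 0 < α < 2(s/m)/((s/m) + 1)). Then χ(−1) < 0, where χ is the characteristic polynomial of the LC-DN-α scheme (second Jury condition in the proof of Proposition 3, valid for every Δt > 0). -/
/-- Characteristic polynomial of the LC-DN-α scheme for the benchmark FSI
problem, with `s = ρ_s h_s`, `m = ρ_f μ_i`, `β` the elastic coefficient,
`Δt` the time step and `α` the Richardson acceleration parameter. -/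
noncomputable def lcdnChi (s m β Δt α y : ℝ) : ℝ :=
  (s / Δt ^ 2 + β) * y ^ 3
    + (α * m / Δt ^ 2 - β * (1 - α) - 3 * s / Δt ^ 2 + α * s / Δt ^ 2) * y ^ 2
    + (3 * s / Δt ^ 2 - 2 * α * m / Δt ^ 2 - 2 * α * s / Δt ^ 2) * y
    + (-(1 - α) * s / Δt ^ 2 + α * m / Δt ^ 2)

theorem lcdnChi_neg_one (s m β Δt α : ℝ) :
    lcdnChi s m β Δt α (-1) = -(4 * (2 * s - α * (s + m)) / Δt ^ 2 + β * (2 - α)) := by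
  unfold lcdnChi
  ring

theorem lcdn_chi_neg_one_neg_general {s m β Δt α : ℝ} (hm : 0 ≤ m) (hsm : 0 < s + m)
    (hβ : 0 ≤ β) (hΔt : Δt ≠ 0) (hα : α < 2 * s / (s + m)) :
    lcdnChi s m β Δt α (-1) < 0 := by
  -- The inertial part changes sign at `α = 2s/(s + m)`, the elastic part only at `α = 2`,
  -- and the added mass `m` puts the first threshold below the second.
  have threshold_le_two : 2 * s / (s + m) ≤ 2 := by
    rw [div_le_iff₀ hsm]
    linarith
  have inertial_pos : 0 < 4 * (2 * s - α * (s + m)) / Δt ^ 2 := by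
    have : 0 < 2 * s - α * (s + m) := sub_pos.2 ((lt_div_iff₀ hsm).1 hα)
    positivity
  have elastic_nonneg : 0 ≤ β * (2 - α) :=
    mul_nonneg hβ (sub_nonneg.2 (hα.le.trans threshold_le_two))
  rw [lcdnChi_neg_one]
  exact neg_neg_of_pos (add_pos_of_pos_of_nonneg inertial_pos elastic_nonneg)

/-- Second Jury condition in the proof of Proposition 3: if
`0 < α < 2s/(s + m)` then `χ(−1) < 0`, for every `Δt > 0`. -/
theorem lcdn_chi_neg_one_neg (s m β Δt α : ℝ)
    (hs : 0 < s) (hm : 0 < m) (hβ : 0 < β) (hΔt : 0 < Δt)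
    (hα₀ : 0 < α) (hα₁ : α < 2 * s / (s + m)) :
    lcdnChi s m β Δt α (-1) < 0 :=
  lcdn_chi_neg_one_neg_general hm.le (add_pos hs hm) hβ.le hΔt.ne' hα₁
end

section
/- Let s > 0, m > 0, β > 0, Δt > 0, assume s/m < 1 and 0 < α < ᾱ := 2s/(s + m). Then every sequence η : ℕ → ℝ satisfying, for all n, the recurrence (s + βΔt²)·η_{n+3} + (α m − (1−α)βΔt² − (3−α)s)·η_{n+2} + ((3−2α)s − 2α m)·η_{n+1} + (α m − (1−α)s)·η_n = 0 converges to 0 as n → ∞; in particular every such sequence is bounded. (Absolute stability of the LC-DN-α scheme asserted in Proposition 3, expressed on the interface-displacement Fourier coefficients.) -/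
/-!
Let `S` be the shift of sequences. A solution `η` of the recurrence satisfies `χ(S) η = 0`, and over
`ℂ` the operator `χ(S)` is a product of first order operators `S - z`, one for each root `z` of `χ`.
If `‖z‖ < 1`, then `(S - z) u → 0` forces `u → 0`, so peeling off the factors one at a time gives
`η → 0` as soon as all roots of `χ` lie in the open unit disc. The latter follows from Jury's
criterion for real cubics: since `χ(-1) < 0 < χ(1)`, there is a real root in `(-1, 1)`, and the
remaining inequalities are those of Jury's criterion for the quadratic cofactor.
-/

open Filter Polynomial Topology

/-- The shift `(S u) n = u (n + 1)` of sequences. A linear recurrence with constant coefficients and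
characteristic polynomial `P` reads `P(S) u = 0`, that is `aeval (seqShift R V) P u = 0`. -/
def seqShift (R V : Type*) [Semiring R] [AddCommMonoid V] [Module R V] :
    Module.End R (ℕ → V) :=
  LinearMap.funLeft R V (· + 1)

theorem seqShift_apply {R V : Type*} [Semiring R] [AddCommMonoid V] [Module R V]
    (u : ℕ → V) (n : ℕ) : seqShift R V u n = u (n + 1) :=
  rfl

theorem seqShift_pow_apply {R V : Type*} [Semiring R] [AddCommMonoid V] [Module R V]
    (k : ℕ) (u : ℕ → V) (n : ℕ) : (seqShift R V ^ k) u n = u (n + k) := by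
  induction k generalizing n with
  | zero => rfl
  | succ k ih => rw [pow_succ', Module.End.mul_apply, seqShift_apply, ih, add_right_comm, add_assoc]

theorem aeval_seqShift_apply {R V : Type*} [CommSemiring R] [AddCommMonoid V] [Module R V]
    (P : R[X]) (u : ℕ → V) (n : ℕ) :
    aeval (seqShift R V) P u n = ∑ i ∈ Finset.range (P.natDegree + 1), P.coeff i • u (n + i) := by
  simp [aeval_eq_sum_range, LinearMap.sum_apply, seqShift_pow_apply]

theorem algebraMap_aeval_seqShift {R A : Type*} [CommSemiring R] [CommSemiring A] [Algebra R A]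
    [FaithfulSMul R A] (P : R[X]) (u : ℕ → R) (n : ℕ) :
    algebraMap R A (aeval (seqShift R R) P u n) =
      aeval (seqShift A A) (P.map (algebraMap R A)) (fun k ↦ algebraMap R A (u k)) n := by
  simp only [aeval_seqShift_apply, map_sum, smul_eq_mul, map_mul, coeff_map,
    natDegree_map_eq_of_injective (FaithfulSMul.algebraMap_injective R A)]

theorem aeval_seqShift_toPoly_apply {R V : Type*} [CommSemiring R] [AddCommMonoid V] [Module R V]
    (P : Cubic R) (u : ℕ → V) (n : ℕ) :
    aeval (seqShift R V) P.toPoly u n =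
      P.a • u (n + 3) + P.b • u (n + 2) + P.c • u (n + 1) + P.d • u n := by
  simp [Cubic.toPoly, seqShift_pow_apply, seqShift_apply, Module.algebraMap_end_apply]

section Decay

variable {𝕜 V : Type*} [NormedField 𝕜] [SeminormedAddCommGroup V] [NormedSpace 𝕜 V]

theorem tendsto_zero_of_tendsto_sub_smul {u : ℕ → V} {z : 𝕜} (hz : ‖z‖ < 1)
    (h : Tendsto (fun n ↦ u (n + 1) - z • u n) atTop (𝓝 0)) : Tendsto u atTop (𝓝 0) := by
  rw [NormedAddGroup.tendsto_nhds_zero] at h ⊢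
  intro ε hε
  have hgap : 0 < 1 - ‖z‖ := sub_pos.2 hz
  obtain ⟨N, hN⟩ := eventually_atTop.1 (h (ε / 2 * (1 - ‖z‖)) (mul_pos (half_pos hε) hgap))
  have contraction (k : ℕ) :
      ‖u (k + 1 + N)‖ - ε / 2 ≤ ‖z‖ * (‖u (k + N)‖ - ε / 2) := by
    have hstep := norm_le_norm_add_norm_sub' (u (k + N + 1)) (z • u (k + N))
    rw [norm_smul] at hstep
    rw [add_right_comm]
    linarith [hN (k + N) (Nat.le_add_left N k)]
  have geometric (k : ℕ) : ‖u (k + N)‖ - ε / 2 ≤ ‖z‖ ^ k * (‖u (0 + N)‖ - ε / 2) :=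
    le_geom (u := fun k ↦ ‖u (k + N)‖ - ε / 2) (norm_nonneg z) k fun j _ ↦ contraction j
  have hpow : Tendsto (fun k ↦ ‖z‖ ^ k * (‖u (0 + N)‖ - ε / 2)) atTop (𝓝 0) := by
    simpa using (tendsto_pow_atTop_nhds_zero_of_lt_one (norm_nonneg z) hz).mul_const _
  rw [← map_add_atTop_eq_nat N, eventually_map]
  filter_upwards [hpow.eventually_lt_const (half_pos hε)] with k hk
  linarith [geometric k]

theorem tendsto_zero_of_tendsto_aeval_prod_X_sub_C (s : Multiset 𝕜) (hs : ∀ z ∈ s, ‖z‖ < 1)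
    {u : ℕ → V}
    (hu : Tendsto (aeval (seqShift 𝕜 V) (s.map (X - C ·)).prod u) atTop (𝓝 0)) :
    Tendsto u atTop (𝓝 0) := by
  induction s using Multiset.induction with
  | empty => simpa using hu
  | cons z s ih =>
    obtain ⟨hz, hs⟩ := Multiset.forall_mem_cons.1 hs
    refine ih hs (tendsto_zero_of_tendsto_sub_smul hz ?_)
    simpa [Function.comp_def, seqShift_apply, Pi.sub_def, Module.algebraMap_end_apply] using hu

theorem tendsto_zero_of_tendsto_aeval_seqShift {P : 𝕜[X]} (hP : P.Splits) (hP₀ : P ≠ 0)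
    (hroots : ∀ z ∈ P.roots, ‖z‖ < 1) {u : ℕ → V}
    (hu : Tendsto (aeval (seqShift 𝕜 V) P u) atTop (𝓝 0)) : Tendsto u atTop (𝓝 0) := by
  refine tendsto_zero_of_tendsto_aeval_prod_X_sub_C P.roots hroots ?_
  rw [hP.eq_prod_roots] at hu
  simpa [Module.algebraMap_end_apply, smul_smul, hP₀] using
    hu.const_smul P.leadingCoeff⁻¹

end Decay

/-- A real polynomial is Schur stable if all its complex roots lie in the open unit disc. The zero
polynomial is not Schur stable. -/
def IsSchurStable (P : ℝ[X]) : Prop :=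
  ∀ z : ℂ, aeval z P = 0 → ‖z‖ < 1

theorem IsSchurStable.ne_zero {P : ℝ[X]} (hP : IsSchurStable P) : P ≠ 0 := by
  rintro rfl
  simpa using hP 1 (map_zero _)

theorem IsSchurStable.mul {P Q : ℝ[X]} (hP : IsSchurStable P) (hQ : IsSchurStable Q) :
    IsSchurStable (P * Q) := fun z hz ↦ by
  rw [map_mul, mul_eq_zero] at hz
  exact hz.elim (hP z) (hQ z)

theorem IsSchurStable.tendsto_zero {P : ℝ[X]} (hP : IsSchurStable P) {u : ℕ → ℝ}
    (hu : Tendsto (aeval (seqShift ℝ ℝ) P u) atTop (𝓝 0)) : Tendsto u atTop (𝓝 0) := by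
  rw [← tendsto_ofReal_iff] at hu ⊢
  refine tendsto_zero_of_tendsto_aeval_seqShift (𝕜 := ℂ) (IsAlgClosed.splits _)
    (map_ne_zero hP.ne_zero : P.map (algebraMap ℝ ℂ) ≠ 0) (fun z hz ↦ hP z ?_) ?_
  · simpa using (mem_roots'.1 hz).2
  · exact hu.congr fun n ↦ algebraMap_aeval_seqShift P u n

theorem isSchurStable_X_sub_C {r : ℝ} (hr : |r| < 1) : IsSchurStable (X - C r) := fun z hz ↦ by
  have hzr : z = r := by simpa [sub_eq_zero] using hz
  simpa [hzr] using hr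

theorem quadratic_pos_of_one_le {a p q x : ℝ} (ha : 0 < a) (hq : q < a) (h_one : 0 < a + p + q)
    (hx : 1 ≤ x) : 0 < a * x ^ 2 + p * x + q := by
  have hq' : q ≤ a * x := hq.le.trans (le_mul_of_one_le_right ha.le hx)
  calc
    0 < x * (a + p + q) + (x - 1) * (a * x - q) :=
      add_pos_of_pos_of_nonneg (mul_pos (by linarith) h_one)
        (mul_nonneg (sub_nonneg.2 hx) (sub_nonneg.2 hq'))
    _ = a * x ^ 2 + p * x + q := by ring

theorem abs_lt_one_of_quadratic_eq_zero {a p q x : ℝ} (h_one : 0 < a + p + q)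
    (h_neg_one : 0 < a - p + q) (hq : q < a) (hx : a * x ^ 2 + p * x + q = 0) : |x| < 1 := by
  have ha : 0 < a := by linarith
  by_contra! h
  rcases le_abs.1 h with hx_ge | hx_le
  · exact (quadratic_pos_of_one_le ha hq h_one hx_ge).ne' hx
  · refine (quadratic_pos_of_one_le (p := -p) ha hq (by linarith) hx_le).ne' ?_
    linear_combination hx

theorem isSchurStable_quadratic {a p q : ℝ} (h_one : 0 < a + p + q) (h_neg_one : 0 < a - p + q)
    (hq : q < a) : IsSchurStable (C a * X ^ 2 + C p * X + C q) := fun z hz ↦ by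
  have hz' : (a : ℂ) * z ^ 2 + p * z + q = 0 := by simpa using hz
  have hre : a * (z.re ^ 2 - z.im ^ 2) + p * z.re + q = 0 := by
    simpa [sq] using congrArg Complex.re hz'
  have him : z.im * (2 * a * z.re + p) = 0 := by
    have h : a * (z.re * z.im + z.im * z.re) + p * z.im = 0 := by
      simpa [sq] using congrArg Complex.im hz'
    linear_combination h
  rcases mul_eq_zero.1 him with hreal | hpair
  · have hzr : z = z.re := Complex.ext rfl (by simpa using hreal)
    rw [hzr, Complex.norm_real]
    refine abs_lt_one_of_quadratic_eq_zero h_one h_neg_one hq ?_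
    simpa [hreal] using hre
  -- Conjugate roots `z` and `conj z` have product `q / a`.
  · have hprod : a * ‖z‖ ^ 2 = q := by
      rw [Complex.sq_norm, Complex.normSq_apply]
      linear_combination z.re * hpair - hre
    have ha : 0 < a := by linarith
    exact (sq_lt_one_iff₀ (norm_nonneg z)).1 (lt_of_mul_lt_mul_left (by linarith) ha.le)

theorem exists_root_mem_Ioo_of_cubic {P : Cubic ℝ} (h_one : 0 < P.a + P.b + P.c + P.d)
    (h_neg_one : -P.a + P.b - P.c + P.d < 0) :
    ∃ r ∈ Set.Ioo (-1 : ℝ) 1, P.toPoly.IsRoot r :=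
  intermediate_value_Ioo (by norm_num) P.toPoly.continuousOn
    ⟨by simpa [Cubic.toPoly, pow_succ, sub_eq_add_neg] using h_neg_one,
      by simpa [Cubic.toPoly] using h_one⟩

theorem exists_cubic_eq_of_isRoot {R : Type*} [CommRing R] {P : Cubic R} {r : R}
    (hr : P.toPoly.IsRoot r) : ∃ p q, P = ⟨P.a, p - r * P.a, q - r * p, -(r * q)⟩ := by
  have heval : P.a * r ^ 3 + P.b * r ^ 2 + P.c * r + P.d = 0 := by
    simpa [Cubic.toPoly] using hr
  refine ⟨P.b + r * P.a, P.c + r * (P.b + r * P.a), Cubic.ext rfl ?_ ?_ ?_⟩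
  · ring
  · ring
  · linear_combination heval

theorem cubic_toPoly_eq_X_sub_C_mul_quadratic {R : Type*} [CommRing R] (a p q r : R) :
    (⟨a, p - r * a, q - r * p, -(r * q)⟩ : Cubic R).toPoly =
      (X - C r) * (C a * X ^ 2 + C p * X + C q) := by
  simp only [Cubic.toPoly, map_sub, map_neg, map_mul]
  ring

theorem reverse_quadratic_pos {a p q r : ℝ} (h_one : 0 < a + p + q) (h_neg_one : 0 < a - p + q)
    (hr : |r| < 1) (hrq : |r * q| < a) : 0 < a + r * p + r ^ 2 * q := by
  obtain ⟨hr_gt, hr_lt⟩ := abs_lt.1 hr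
  obtain ⟨hrq_gt, hrq_lt⟩ := abs_lt.1 hrq
  rcases le_total 0 r with h | h
  · calc
      0 < r * (a + p + q) + (1 - r) * (a - r * q) :=
        add_pos_of_nonneg_of_pos (mul_nonneg h h_one.le)
          (mul_pos (by linarith) (by linarith))
      _ = a + r * p + r ^ 2 * q := by ring
  · calc
      0 < -r * (a - p + q) + (1 + r) * (a + r * q) :=
        add_pos_of_nonneg_of_pos (mul_nonneg (neg_nonneg.2 h) h_neg_one.le)
          (mul_pos (by linarith) (by linarith))
      _ = a + r * p + r ^ 2 * q := by ring

theorem isSchurStable_cubic_of_jury {P : Cubic ℝ} (h_one : 0 < P.a + P.b + P.c + P.d)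
    (h_neg_one : -P.a + P.b - P.c + P.d < 0) (h_lead : |P.d| < P.a)
    (h_det : 0 < P.a ^ 2 - P.d ^ 2 - P.a * P.c + P.b * P.d) : IsSchurStable P.toPoly := by
  obtain ⟨r, ⟨hr_gt, hr_lt⟩, hr⟩ := exists_root_mem_Ioo_of_cubic h_one h_neg_one
  have hr_abs : |r| < 1 := abs_lt.2 ⟨hr_gt, hr_lt⟩
  obtain ⟨p, q, hP⟩ := exists_cubic_eq_of_isRoot hr
  generalize P.a = a at hP
  subst hP
  dsimp only at h_one h_neg_one h_lead h_det
  have hquad_one : 0 < a + p + q := by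
    have h : 0 < (1 - r) * (a + p + q) := by linarith
    exact pos_of_mul_pos_right h (by linarith)
  have hquad_neg_one : 0 < a - p + q := by
    have h : 0 < (1 + r) * (a - p + q) := by linarith
    exact pos_of_mul_pos_right h (by linarith)
  have hquad_lead : q < a := by
    have h : 0 < (a + r * p + r ^ 2 * q) * (a - q) := by linarith
    have h_reverse : 0 < a + r * p + r ^ 2 * q :=
      reverse_quadratic_pos hquad_one hquad_neg_one hr_abs (abs_neg (r * q) ▸ h_lead)
    exact sub_pos.1 (pos_of_mul_pos_right h h_reverse.le)
  rw [cubic_toPoly_eq_X_sub_C_mul_quadratic]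
  exact (isSchurStable_X_sub_C hr_abs).mul
    (isSchurStable_quadratic hquad_one hquad_neg_one hquad_lead)

/-- The characteristic polynomial `χ` of the LC-DN-α scheme, multiplied by `Δt ^ 2`; the parameter
`b` stands for `β * Δt ^ 2`. -/
def lcdnAlphaCubic (s m b α : ℝ) : Cubic ℝ where
  a := s + b
  b := α * m - (1 - α) * b - (3 - α) * s
  c := (3 - 2 * α) * s - 2 * α * m
  d := α * m - (1 - α) * s

theorem isSchurStable_lcdnAlphaCubic {s m b α : ℝ} (hs : 0 < s) (hm : 0 < m) (hb : 0 < b)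
    (hα₀ : 0 < α) (hα₁ : α < 2 * s / (s + m)) :
    IsSchurStable (lcdnAlphaCubic s m b α).toPoly := by
  have hαsm : α * (s + m) < 2 * s := (lt_div_iff₀ (by positivity)).1 hα₁
  have hα_lt_two : α < 2 := hα₁.trans <| (div_lt_iff₀ (by positivity)).2 (by linarith)
  have hα_pos : 0 < α * (s + m) := by positivity
  apply isSchurStable_cubic_of_jury <;> simp only [lcdnAlphaCubic]
  · have h_one : 0 < α * b := by positivity
    linarith
  · have h_neg_one : 4 * (α * (s + m) - 2 * s) - (2 - α) * b < 0 := by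
      linarith [mul_pos (sub_pos.2 hα_lt_two) hb]
    linarith
  · rw [abs_lt]
    constructor <;> linarith
  · have h_det : 0 < b * (b + α * m + α * (α * (s + m))) := by positivity
    linarith

theorem lcdn_alpha_stable_sequences_general (s m β Δt α : ℝ)
    (hs : 0 < s) (hm : 0 < m) (hβ : 0 < β) (hΔt : 0 < Δt)
    (hα₀ : 0 < α) (hα₁ : α < 2 * s / (s + m)) :
    ∀ η : ℕ → ℝ,
      (∀ n : ℕ,
        (s + β * Δt ^ 2) * η (n + 3)
          + (α * m - (1 - α) * β * Δt ^ 2 - (3 - α) * s) * η (n + 2)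
          + ((3 - 2 * α) * s - 2 * α * m) * η (n + 1)
          + (α * m - (1 - α) * s) * η n = 0) →
      Tendsto η atTop (𝓝 0) ∧ ∃ C : ℝ, ∀ n : ℕ, |η n| ≤ C := by
  intro η hη
  have hχ : IsSchurStable (lcdnAlphaCubic s m (β * Δt ^ 2) α).toPoly :=
    isSchurStable_lcdnAlphaCubic hs hm (by positivity) hα₀ hα₁
  have hrec : aeval (seqShift ℝ ℝ) (lcdnAlphaCubic s m (β * Δt ^ 2) α).toPoly η = 0 := by
    ext n
    simpa [aeval_seqShift_toPoly_apply, lcdnAlphaCubic, mul_assoc] using hη n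
  have hlim : Tendsto η atTop (𝓝 0) := hχ.tendsto_zero (hrec ▸ tendsto_const_nhds)
  obtain ⟨C, hC⟩ := hlim.abs.bddAbove_range
  exact ⟨hlim, C, fun n ↦ hC ⟨n, rfl⟩⟩

/-- Absolute stability of the LC-DN-α scheme (Proposition 3), expressed on
the interface-displacement Fourier coefficients: if `s/m < 1` and
`0 < α < 2s/(s + m)`, then every solution of the finite-difference equation
of the LC-DN-α scheme converges to 0; in particular it is bounded. -/
theorem lcdn_alpha_stable_sequences (s m β Δt α : ℝ)
    (hs : 0 < s) (hm : 0 < m) (hβ : 0 < β) (hΔt : 0 < Δt)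
    (hratio : s / m < 1)
    (hα₀ : 0 < α) (hα₁ : α < 2 * s / (s + m)) :
    ∀ η : ℕ → ℝ,
      (∀ n : ℕ,
        (s + β * Δt ^ 2) * η (n + 3)
          + (α * m - (1 - α) * β * Δt ^ 2 - (3 - α) * s) * η (n + 2)
          + ((3 - 2 * α) * s - 2 * α * m) * η (n + 1)
          + (α * m - (1 - α) * s) * η n = 0) →
      Filter.Tendsto η Filter.atTop (nhds 0) ∧ ∃ C : ℝ, ∀ n : ℕ, |η n| ≤ C := by
  exact lcdn_alpha_stable_sequences_general s m β Δt α hs hm hβ hΔt hα₀ hα₁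
end
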